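/- arXiv:2004.10128 — 3 statements merged into one kernel-verified Lean document; each statement's English description precedes it below -/
import Mathlib

section
/- −cos(π/15) + cos(2π/15) + cos(4π/15) − cos(7π/15) = 1/2. -/
open Real

/-!
Replacing `cos (4 * π / 15)` and `cos (7 * π / 15)` by the cosines of the supplementary angles
turns the sum into a difference of two sums of the form `cos (π / 3 - x) + cos (π / 3 + x)`, with
`x = π / 5` and `x = 2 * π / 5`. As `2 * cos (π / 3) = 1`, each such sum is `cos x`, and what
remains, `cos (π / 5) - cos (2 * π / 5) = 1 / 2`, is the quadratic equation for `cos (π / 5)`.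
-/

theorem cos_pi_div_three_sub_add_cos_pi_div_three_add (x : ℝ) :
    cos (π / 3 - x) + cos (π / 3 + x) = cos x := by
  rw [← two_mul_cos_mul_cos, cos_pi_div_three]
  ring

theorem cos_pi_div_five_sub_cos_two_mul_pi_div_five :
    cos (π / 5) - cos (2 * (π / 5)) = 1 / 2 := by
  rw [cos_two_mul]
  linear_combination -(1 / 2) * quadratic_root_cos_pi_div_five

theorem stmt10 : -Real.cos (π / 15) + Real.cos (2 * π / 15) + Real.cos (4 * π / 15) - Real.cos (7 * π / 15) = 1 / 2 := by
  have h₁ : cos (π / 15) = cos (π / 3 - 2 * (π / 5)) := by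
    rw [← cos_neg]; congr 1; ring
  have h₂ : cos (2 * π / 15) = cos (π / 3 - π / 5) := by
    congr 1; ring
  have h₄ : cos (4 * π / 15) = -cos (π / 3 + 2 * (π / 5)) := by
    rw [← cos_pi_sub]; congr 1; ring
  have h₇ : cos (7 * π / 15) = -cos (π / 3 + π / 5) := by
    rw [← cos_pi_sub]; congr 1; ring
  rw [h₁, h₂, h₄, h₇]
  linear_combination cos_pi_div_three_sub_add_cos_pi_div_three_add (π / 5) -
    cos_pi_div_three_sub_add_cos_pi_div_three_add (2 * (π / 5)) +
    cos_pi_div_five_sub_cos_two_mul_pi_div_five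
end

section
/- Let n ≥ 4 be an even integer, let r ∈ ℚ with 0 < r < 1, let p, q be integers with 0 < q < p < n, and let r₀, r_p, r_q be real numbers each of the form k − r for some integer k. Then r₀·sin((p−q)π/n) + r_p·sin(qπ/n) − r_q·sin(pπ/n) ≠ 0. -/
open Real

/-!
Put `x = exp (2πis)`, `y = exp (2πit)` with `s = (p - q) / 2n` and `t = q / 2n`. Multiplying the
sine combination by `2i·xy` turns its vanishing into an equation whose `r`-part factors:
`r (1 - x) (1 - y) (1 - xy)` is an algebraic integer. As `r` is not an integer, some prime `l`
divides `(1 - x) (1 - y) (1 - xy)`, so the `l`-adic valuations of the three factors add up to at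
least `1`. But `1 - ζ`, for `ζ` of order `m`, has valuation `1 / φ(m)` if `m` is a power of `l` and
`0` otherwise, and with `0 < s, t` and `s + t < 1 / 2` the sum reaches `1` only at `l = 2` and
`(s, t) ∈ {(1/8, 1/8), (1/4, 1/8), (1/8, 1/4)}`. There exactly one of the three sines is rational,
and the irrationality of `√2` excludes a zero.
-/

open Polynomial (cyclotomic)

theorem dvd_of_algebraMap_dvd_algebraMap {A B : Type*} [CommRing A] [IsDomain A]
    [IsIntegrallyClosed A] [CommRing B] [IsDomain B] [Algebra A B] [FaithfulSMul A B]
    [Algebra.IsIntegral A B] {a b : A} (h : algebraMap A B a ∣ algebraMap A B b) : a ∣ b := by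
  obtain ⟨c, hc⟩ := h
  obtain rfl | ha := eq_or_ne a 0
  · simpa using hc
  let K := FractionRing A
  let L := FractionRing B
  let : Algebra K L := FractionRing.liftAlgebra A L
  have haK : algebraMap A K a ≠ 0 := by simpa using ha
  have haL : algebraMap A L a ≠ 0 := by simpa using ha
  have hcL : algebraMap B L c = algebraMap K L (algebraMap A K b / algebraMap A K a) := by
    rw [map_div₀, ← IsScalarTower.algebraMap_apply, ← IsScalarTower.algebraMap_apply,
      eq_div_iff haL, IsScalarTower.algebraMap_apply A B L a,
      IsScalarTower.algebraMap_apply A B L b, hc, map_mul, mul_comm]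
  have hint : IsIntegral A (algebraMap A K b / algebraMap A K a) := by
    rw [← isIntegral_algebraMap_iff (algebraMap K L).injective, ← hcL]
    exact (Algebra.IsIntegral.isIntegral c).algebraMap
  obtain ⟨d, hd⟩ := IsIntegrallyClosed.isIntegral_iff.1 hint
  refine ⟨d, IsFractionRing.injective A K ?_⟩
  rw [map_mul, hd, mul_div_cancel₀ _ haK]

theorem one_sub_pow_totient_dvd_eval_one_cyclotomic {R : Type*} [CommRing R] [IsDomain R]
    {m : ℕ} [NeZero m] {x : R} (hx : IsPrimitiveRoot x m) :
    (1 - x) ^ m.totient ∣ (((cyclotomic m ℤ).eval 1 : ℤ) : R) := by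
  have heval : (((cyclotomic m ℤ).eval 1 : ℤ) : R) = ∏ μ ∈ primitiveRoots m R, (1 - μ) := by
    rw [← eq_intCast (Int.castRingHom R), ← Polynomial.eval_one_map, Polynomial.map_cyclotomic,
      Polynomial.cyclotomic_eq_prod_X_sub_primitiveRoots hx, Polynomial.eval_prod]
    simp only [Polynomial.eval_sub, Polynomial.eval_X, Polynomial.eval_C]
  rw [heval, ← hx.card_primitiveRoots, ← Finset.prod_const]
  refine Finset.prod_dvd_prod_of_dvd _ _ fun μ hμ ↦ ?_
  obtain ⟨i, -, rfl⟩ := hx.eq_pow_of_pow_eq_one <|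
    (isPrimitiveRoot_of_mem_primitiveRoots hμ).pow_eq_one
  exact one_sub_dvd_one_sub_pow x i

/-- The `l`-adic valuation of `1 - ζ`, for `ζ` a primitive `m`-th root of unity, normalised so that
`l` has valuation `1`. It is read off from `Φ_m(1)`, which is the product of the `φ(m)` conjugates
of `1 - ζ`; for `m ≤ 1` the value is the junk `0`. -/
noncomputable def oneSubRootVal (l m : ℕ) : ℚ :=
  ((cyclotomic m ℤ).eval 1).natAbs.factorization l / m.totient

theorem oneSubRootVal_prime_pow {l : ℕ} (hl : l.Prime) (k : ℕ) :
    oneSubRootVal l (l ^ (k + 1)) = 1 / (l ^ (k + 1)).totient := by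
  have : Fact l.Prime := ⟨hl⟩
  simp [oneSubRootVal, Polynomial.eval_one_cyclotomic_prime_pow, hl.factorization_self]

theorem oneSubRootVal_eq_zero {l m : ℕ} (hl : l.Prime) (hm : ∀ k, m ≠ l ^ (k + 1)) :
    oneSubRootVal l m = 0 := by
  suffices ((cyclotomic m ℤ).eval 1).natAbs.factorization l = 0 by simp [oneSubRootVal, this]
  obtain rfl | hm1 := eq_or_ne m 1
  · simp
  by_cases hpow : ∃ p : ℕ, p.Prime ∧ ∃ k, p ^ (k + 1) = m
  · obtain ⟨p, hp, k, rfl⟩ := hpow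
    have : Fact p.Prime := ⟨hp⟩
    have hpl : p ≠ l := by rintro rfl; exact hm k rfl
    simp [Polynomial.eval_one_cyclotomic_prime_pow, hp.factorization, hpl]
  · push Not at hpow
    rw [Polynomial.eval_one_cyclotomic_not_prime_pow]
    · simp
    · rintro p hp (_ | k)
      · simpa using hm1.symm
      · exact hpow p hp k

theorem oneSubRootVal_eq_or_le {l : ℕ} (hl : l.Prime) (m N : ℕ) :
    (∃ k < N, m = l ^ (k + 1) ∧ oneSubRootVal l m = 1 / (l ^ (k + 1)).totient) ∨
      oneSubRootVal l m ≤ 1 / (l ^ (N + 1)).totient := by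
  by_cases hm : ∃ k, m = l ^ (k + 1)
  · obtain ⟨k, rfl⟩ := hm
    rw [oneSubRootVal_prime_pow hl]
    obtain hk | hk := lt_or_ge k N
    · exact .inl ⟨k, hk, rfl, rfl⟩
    · right
      have hpos (j : ℕ) : 0 < (l ^ j).totient := Nat.totient_pos.2 (pow_pos hl.pos j)
      have := hpos (N + 1)
      gcongr
      exact Nat.le_of_dvd (hpos _) (Nat.totient_dvd_of_dvd (pow_dvd_pow l (by lia)))
  · push Not at hm
    rw [oneSubRootVal_eq_zero hl hm]
    exact .inr (by positivity)

theorem natCast_mul_oneSubRootVal (l : ℕ) {m E : ℕ} (hE : m.totient ∣ E) :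
    E * oneSubRootVal l m =
      (((cyclotomic m ℤ).eval 1).natAbs ^ (E / m.totient)).factorization l := by
  rw [Nat.factorization_pow, Finsupp.smul_apply, smul_eq_mul, Nat.cast_mul,
    Nat.cast_div_charZero hE, oneSubRootVal, div_mul_eq_mul_div, mul_div_assoc]

theorem eval_one_cyclotomic_pos {m : ℕ} (hm : 1 < m) : 0 < (cyclotomic m ℤ).eval 1 := by
  have : NeZero (m : ℤ) := ⟨by lia⟩
  refine (Polynomial.cyclotomic_nonneg m le_rfl).lt_of_ne' fun h ↦ hm.ne' ?_
  exact (Polynomial.isRoot_cyclotomic_iff.1 h).unique .one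

theorem one_le_sum_oneSubRootVal {R ι : Type*} [CommRing R] [IsDomain R] [CharZero R]
    [Algebra.IsIntegral ℤ R] {l : ℕ} (hl : l.Prime) {s : Finset ι} {x : ι → R} {m : ι → ℕ}
    (hx : ∀ i ∈ s, IsPrimitiveRoot (x i) (m i)) (hm : ∀ i ∈ s, 1 < m i)
    (hdvd : (l : R) ∣ ∏ i ∈ s, (1 - x i)) : 1 ≤ ∑ i ∈ s, oneSubRootVal l (m i) := by
  let φ (i : ι) : ℕ := (m i).totient
  let N (i : ι) : ℕ := ((cyclotomic (m i) ℤ).eval 1).natAbs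
  let E : ℕ := ∏ i ∈ s, φ i
  have hφ {i} (hi : i ∈ s) : 0 < φ i := Nat.totient_pos.2 (zero_lt_one.trans (hm i hi))
  have hφE {i} (hi : i ∈ s) : φ i ∣ E := Finset.dvd_prod_of_mem _ hi
  have hN0 {i} (hi : i ∈ s) : N i ^ (E / φ i) ≠ 0 :=
    pow_ne_zero _ (Int.natAbs_ne_zero.2 (eval_one_cyclotomic_pos (hm i hi)).ne')
  have hN {i} (hi : i ∈ s) : (1 - x i) ^ φ i ∣ (N i : R) := by
    have : NeZero (m i) := ⟨(zero_lt_one.trans (hm i hi)).ne'⟩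
    simpa only [N, Nat.cast_natAbs, abs_of_pos (eval_one_cyclotomic_pos (hm i hi))]
      using one_sub_pow_totient_dvd_eval_one_cyclotomic (hx i hi)
  have hR : (l : R) ^ E ∣ ∏ i ∈ s, (N i : R) ^ (E / φ i) := by
    refine (pow_dvd_pow_of_dvd hdvd E).trans ?_
    rw [← Finset.prod_pow]
    refine Finset.prod_dvd_prod_of_dvd _ _ fun i hi ↦ ?_
    simpa only [← pow_mul, Nat.mul_div_cancel' (hφE hi)]
      using pow_dvd_pow_of_dvd (hN hi) (E / φ i)
  have hNat : l ^ E ∣ ∏ i ∈ s, N i ^ (E / φ i) := by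
    rw [← Int.natCast_dvd_natCast]
    exact dvd_of_algebraMap_dvd_algebraMap (B := R) (by simpa using hR)
  rw [hl.pow_dvd_iff_le_factorization (Finset.prod_ne_zero_iff.2 fun _ ↦ hN0),
    Nat.factorization_prod_apply fun _ ↦ hN0] at hNat
  have hEpos : (0 : ℚ) < E := by exact_mod_cast Finset.prod_pos fun _ ↦ hφ
  refine le_of_mul_le_mul_left ?_ hEpos
  calc (E : ℚ) * 1 ≤ ∑ i ∈ s, ((N i ^ (E / φ i)).factorization l : ℚ) := by
        rw [mul_one]; exact_mod_cast hNat
    _ = E * ∑ i ∈ s, oneSubRootVal l (m i) := by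
        rw [Finset.mul_sum]
        exact Finset.sum_congr rfl fun i hi ↦ (natCast_mul_oneSubRootVal l (hφE hi)).symm

section Fractions

variable {s : ℚ}

theorem num_pos_and_two_mul_num_lt_den (hs0 : 0 < s) (hs : s < 1 / 2) :
    0 < s.num ∧ 2 * s.num < s.den := by
  refine ⟨Rat.num_pos.2 hs0, ?_⟩
  have hden : (0 : ℚ) < s.den := by exact_mod_cast s.pos
  rw [← Rat.num_div_den s, div_lt_iff₀ hden] at hs
  exact_mod_cast (by linarith : (2 * s.num : ℚ) < s.den)

theorem two_lt_den_of_lt_one_half (hs0 : 0 < s) (hs : s < 1 / 2) : 2 < s.den := by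
  have := num_pos_and_two_mul_num_lt_den hs0 hs
  lia

theorem eq_one_third_of_den_eq_three (hs0 : 0 < s) (hs : s < 1 / 2) (h : s.den = 3) :
    s = 1 / 3 := by
  have hnum := num_pos_and_two_mul_num_lt_den hs0 hs
  have h1 : s.num = 1 := by lia
  rw [← Rat.num_div_den s, h, h1]; norm_num

theorem eq_one_fourth_of_den_eq_four (hs0 : 0 < s) (hs : s < 1 / 2) (h : s.den = 4) :
    s = 1 / 4 := by
  have hnum := num_pos_and_two_mul_num_lt_den hs0 hs
  have h1 : s.num = 1 := by lia
  rw [← Rat.num_div_den s, h, h1]; norm_num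

theorem eq_one_or_three_eighths_of_den_eq_eight (hs0 : 0 < s) (hs : s < 1 / 2) (h : s.den = 8) :
    s = 1 / 8 ∨ s = 3 / 8 := by
  have hnum := num_pos_and_two_mul_num_lt_den hs0 hs
  have hcop := s.reduced
  rw [h] at hnum hcop
  have h2 : s.num ≠ 2 := by intro h2; rw [h2] at hcop; norm_num at hcop
  obtain h1 | h3 : s.num = 1 ∨ s.num = 3 := by lia
  · left; rw [← Rat.num_div_den s, h, h1]; norm_num
  · right; rw [← Rat.num_div_den s, h, h3]; norm_num

theorem oneSubRootVal_two_den (hs0 : 0 < s) (hs : s < 1 / 2) :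
    (s = 1 / 4 ∧ oneSubRootVal 2 s.den = 1 / 2) ∨
      ((s = 1 / 8 ∨ s = 3 / 8) ∧ oneSubRootVal 2 s.den = 1 / 4) ∨
      oneSubRootVal 2 s.den ≤ 1 / 8 := by
  have hden := two_lt_den_of_lt_one_half hs0 hs
  obtain ⟨k, hk, hm, hval⟩ | hle := oneSubRootVal_eq_or_le Nat.prime_two s.den 3
  · interval_cases k
    · lia
    · refine .inl ⟨eq_one_fourth_of_den_eq_four hs0 hs hm, ?_⟩
      rw [hval, Nat.totient_prime_pow_succ Nat.prime_two]; norm_num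
    · refine .inr (.inl ⟨eq_one_or_three_eighths_of_den_eq_eight hs0 hs hm, ?_⟩)
      rw [hval, Nat.totient_prime_pow_succ Nat.prime_two]; norm_num
  · rw [Nat.totient_prime_pow_succ Nat.prime_two] at hle
    exact .inr (.inr (hle.trans_eq (by norm_num)))

theorem oneSubRootVal_three_den (hs0 : 0 < s) (hs : s < 1 / 2) :
    (s = 1 / 3 ∧ oneSubRootVal 3 s.den = 1 / 2) ∨ oneSubRootVal 3 s.den ≤ 1 / 6 := by
  obtain ⟨k, hk, hm, hval⟩ | hle := oneSubRootVal_eq_or_le Nat.prime_three s.den 1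
  · obtain rfl : k = 0 := by lia
    refine .inl ⟨eq_one_third_of_den_eq_three hs0 hs hm, ?_⟩
    rw [hval, Nat.totient_prime_pow_succ Nat.prime_three]; norm_num
  · rw [Nat.totient_prime_pow_succ Nat.prime_three] at hle
    exact .inr (hle.trans_eq (by norm_num))

end Fractions

theorem oneSubRootVal_le_one_fourth {l : ℕ} (hl : l.Prime) (hl5 : 5 ≤ l) (m : ℕ) :
    oneSubRootVal l m ≤ 1 / 4 := by
  obtain ⟨k, hk, -⟩ | hle := oneSubRootVal_eq_or_le hl m 0
  · lia
  · rw [zero_add, pow_one, Nat.totient_prime hl] at hle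
    refine hle.trans (one_div_le_one_div_of_le (by norm_num) ?_)
    exact_mod_cast (by lia : 4 ≤ l - 1)

theorem oneSubRootVal_add_lt_one {l : ℕ} (hl : l.Prime) (hl2 : l ≠ 2) {s t : ℚ} (hs : 0 < s)
    (ht : 0 < t) (hst : s + t < 1 / 2) :
    oneSubRootVal l s.den + oneSubRootVal l t.den + oneSubRootVal l (s + t).den < 1 := by
  obtain rfl | hl3 := eq_or_ne l 3
  · -- At most one of `s`, `t`, `s + t` equals `1 / 3`.
    rcases oneSubRootVal_three_den hs (by linarith) with ⟨hs3, hvs⟩ | hvs <;>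
    rcases oneSubRootVal_three_den ht (by linarith) with ⟨ht3, hvt⟩ | hvt <;>
    rcases oneSubRootVal_three_den (add_pos hs ht) hst with ⟨hst3, hvst⟩ | hvst <;>
    linarith
  · have hl5 : 5 ≤ l := hl.five_le_of_ne_two_of_ne_three hl2 hl3
    linarith [oneSubRootVal_le_one_fourth hl hl5 s.den, oneSubRootVal_le_one_fourth hl hl5 t.den,
      oneSubRootVal_le_one_fourth hl hl5 (s + t).den]

theorem eq_eighths_of_one_le_oneSubRootVal_two_add {s t : ℚ} (hs : 0 < s) (ht : 0 < t)
    (hst : s + t < 1 / 2)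
    (h : 1 ≤ oneSubRootVal 2 s.den + oneSubRootVal 2 t.den + oneSubRootVal 2 (s + t).den) :
    (s = 1 / 8 ∧ t = 1 / 8) ∨ (s = 1 / 4 ∧ t = 1 / 8) ∨ (s = 1 / 8 ∧ t = 1 / 4) := by
  -- At most one of `s`, `t`, `s + t` equals `1 / 4`, so the sum reaches `1` only as
  -- `1 / 2 + 1 / 4 + 1 / 4`.
  rcases oneSubRootVal_two_den hs (by linarith) with ⟨rfl, hvs⟩ | ⟨rfl | rfl, hvs⟩ | hvs <;>
  rcases oneSubRootVal_two_den ht (by linarith) with ⟨rfl, hvt⟩ | ⟨rfl | rfl, hvt⟩ | hvt <;>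
  rcases oneSubRootVal_two_den (add_pos hs ht) hst with ⟨_, hvst⟩ | ⟨_ | _, hvst⟩ | hvst <;>
  first
  | exact absurd h (by linarith)
  | norm_num

/-- The root of unity `exp (2πis)`, whose order is the denominator of `s`, as an element of the
ring of algebraic integers, where divisibility by a prime number is meaningful. -/
noncomputable def expRoot (s : ℚ) : integralClosure ℤ ℂ :=
  ⟨Complex.exp (2 * π * Complex.I * s), (Complex.isPrimitiveRoot_exp_rat s).isIntegral s.pos⟩

theorem isPrimitiveRoot_expRoot (s : ℚ) : IsPrimitiveRoot (expRoot s) s.den :=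
  IsPrimitiveRoot.coe_submonoidClass_iff.1 (Complex.isPrimitiveRoot_exp_rat s)

theorem expRoot_add (s t : ℚ) : expRoot (s + t) = expRoot s * expRoot t := by
  ext
  simp [expRoot, mul_add, Complex.exp_add]

theorem two_mul_I_mul_sin_mul_expRoot (s : ℚ) :
    2 * Complex.I * (Real.sin (2 * π * s) : ℂ) * (expRoot s : ℂ) = (expRoot s : ℂ) ^ 2 - 1 := by
  have hexp : (expRoot s : ℂ) = Complex.exp ((2 * π * s : ℂ) * Complex.I) := by
    simp only [expRoot]; ring_nf
  rw [Complex.ofReal_sin, hexp, Complex.sin, neg_mul, Complex.exp_neg]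
  push_cast
  generalize (2 * π * s : ℂ) * Complex.I = z
  have hz := Complex.exp_ne_zero z
  field_simp
  linear_combination (1 - Complex.exp z ^ 2) * Complex.I_sq

theorem exists_prime_natCast_dvd_of_num_mul_eq {R : Type*} [CommRing R] {r : ℚ}
    (hr : r ∉ Set.range ((↑) : ℤ → ℚ)) {x y : R} (h : (r.num : R) * x = r.den * y) :
    ∃ l : ℕ, l.Prime ∧ (l : R) ∣ x := by
  have hden : r.den ≠ 1 := fun h1 ↦ hr ⟨r.num, (Rat.den_eq_one_iff r).1 h1⟩
  obtain ⟨l, hl, hld⟩ := Nat.exists_prime_and_dvd hden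
  have hcop : IsCoprime (l : ℤ) r.num :=
    (Int.isCoprime_iff_nat_coprime.2 (r.reduced.coprime_dvd_right hld)).symm
  have hcopR : IsCoprime (l : R) (r.num : R) := by simpa using hcop.map (Int.castRingHom R)
  refine ⟨l, hl, hcopR.dvd_of_dvd_mul_left ?_⟩
  rw [h]
  exact (Nat.cast_dvd_cast hld).mul_right y

theorem exists_prime_dvd_of_sin_combination_eq_zero {r : ℚ} (hr : r ∉ Set.range ((↑) : ℤ → ℚ))
    {s t : ℚ} {i j k : ℤ}
    (h : (i - r) * Real.sin (2 * π * s) + (j - r) * Real.sin (2 * π * t)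
      - (k - r) * Real.sin (2 * π * (s + t : ℚ)) = 0) :
    ∃ l : ℕ, l.Prime ∧ (l : integralClosure ℤ ℂ) ∣
      (1 - expRoot s) * (1 - expRoot t) * (1 - expRoot (s + t)) := by
  have hs := two_mul_I_mul_sin_mul_expRoot s
  have ht := two_mul_I_mul_sin_mul_expRoot t
  have hst := two_mul_I_mul_sin_mul_expRoot (s + t)
  rw [expRoot_add] at hst ⊢
  set x := expRoot s
  set y := expRoot t
  have hsin := congrArg ((↑) : ℝ → ℂ) h
  push_cast at hs ht hst hsin
  have hfactor : (1 - x : ℂ) * (1 - y) * (1 - x * y) =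
      (x ^ 2 - 1) * y + (y ^ 2 - 1) * x - ((x * y) ^ 2 - 1) := by ring
  have hrel : (r : ℂ) * ((1 - x) * (1 - y) * (1 - x * y)) =
      i * (x ^ 2 - 1) * y + j * (y ^ 2 - 1) * x - k * ((x * y) ^ 2 - 1) := by
    rw [hfactor, ← hs, ← ht, ← hst]
    linear_combination -(2 * Complex.I * x * y) * hsin
  have hnum : (r.num : ℂ) = r.den * r := by exact_mod_cast (Rat.den_mul_eq_num r).symm
  refine exists_prime_natCast_dvd_of_num_mul_eq hr
    (y := i * (x ^ 2 - 1) * y + j * (y ^ 2 - 1) * x - k * ((x * y) ^ 2 - 1)) (Subtype.ext ?_)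
  push_cast
  rw [hnum, mul_assoc, hrel]

theorem one_le_oneSubRootVal_add_of_dvd {l : ℕ} (hl : l.Prime) {s t : ℚ} (hs : 1 < s.den)
    (ht : 1 < t.den) (hst : 1 < (s + t).den)
    (hdvd : (l : integralClosure ℤ ℂ) ∣
      (1 - expRoot s) * (1 - expRoot t) * (1 - expRoot (s + t))) :
    1 ≤ oneSubRootVal l s.den + oneSubRootVal l t.den + oneSubRootVal l (s + t).den := by
  let a : Fin 3 → ℚ := ![s, t, s + t]
  have hden (i) (_ : i ∈ Finset.univ) : 1 < (a i).den := by fin_cases i <;> assumption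
  have hsum := one_le_sum_oneSubRootVal hl (fun i _ ↦ isPrimitiveRoot_expRoot (a i)) hden
    (by simpa [a, Fin.prod_univ_three] using hdvd)
  simpa [a, Fin.sum_univ_three] using hsum

theorem eq_zero_of_add_mul_irrational_eq_zero {x : ℝ} (hx : Irrational x) {a b : ℚ}
    (h : (a : ℝ) + b * x = 0) : a = 0 := by
  obtain rfl | hb := eq_or_ne b 0
  · simpa using h
  · exact absurd h ((hx.ratCast_mul hb).ratCast_add a).ne_zero

theorem sin_combination_ne_zero_of_eighths {r : ℚ} (hr : r ∉ Set.range ((↑) : ℤ → ℚ)) {s t : ℚ}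
    (hst : (s = 1 / 8 ∧ t = 1 / 8) ∨ (s = 1 / 4 ∧ t = 1 / 8) ∨ (s = 1 / 8 ∧ t = 1 / 4))
    (i j k : ℤ) :
    (i - r) * Real.sin (2 * π * s) + (j - r) * Real.sin (2 * π * t)
      - (k - r) * Real.sin (2 * π * (s + t : ℚ)) ≠ 0 := by
  have hne (m : ℤ) : (m : ℚ) - r ≠ 0 := fun hm ↦ hr ⟨m, sub_eq_zero.1 hm⟩
  have hzero {a b : ℚ} (h : (a : ℝ) + b * √2 = 0) : a = 0 :=
    eq_zero_of_add_mul_irrational_eq_zero irrational_sqrt_two h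
  have sin_eighth : Real.sin (2 * π * (1 / 8 : ℚ)) = √2 / 2 := by
    rw [← Real.sin_pi_div_four]; push_cast; ring_nf
  have sin_fourth : Real.sin (2 * π * (1 / 4 : ℚ)) = 1 := by
    rw [← Real.sin_pi_div_two]; push_cast; ring_nf
  have sin_three_eighths : Real.sin (2 * π * (3 / 8 : ℚ)) = √2 / 2 := by
    rw [← Real.sin_pi_div_four, ← Real.sin_pi_sub]; push_cast; ring_nf
  intro h
  obtain ⟨rfl, rfl⟩ | ⟨rfl, rfl⟩ | ⟨rfl, rfl⟩ := hst
  · rw [show (1 / 8 + 1 / 8 : ℚ) = 1 / 4 by norm_num, sin_eighth, sin_fourth] at h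
    exact hne k (hzero (b := -(i - r + (j - r)) / 2) (by push_cast; linarith))
  · rw [show (1 / 4 + 1 / 8 : ℚ) = 3 / 8 by norm_num, sin_eighth, sin_fourth,
      sin_three_eighths] at h
    exact hne i (hzero (b := (j - k) / 2) (by push_cast; linarith))
  · rw [show (1 / 8 + 1 / 4 : ℚ) = 3 / 8 by norm_num, sin_eighth, sin_fourth,
      sin_three_eighths] at h
    exact hne j (hzero (b := (i - k) / 2) (by push_cast; linarith))

theorem sin_combination_ne_zero {r : ℚ} (hr : r ∉ Set.range ((↑) : ℤ → ℚ)) {s t : ℚ}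
    (hs : 0 < s) (ht : 0 < t) (hst : s + t < 1 / 2) (i j k : ℤ) :
    (i - r) * Real.sin (2 * π * s) + (j - r) * Real.sin (2 * π * t)
      - (k - r) * Real.sin (2 * π * (s + t : ℚ)) ≠ 0 := by
  intro h
  obtain ⟨l, hl, hdvd⟩ := exists_prime_dvd_of_sin_combination_eq_zero hr h
  have hden {u : ℚ} (hu0 : 0 < u) (hu : u < 1 / 2) : 1 < u.den :=
    one_lt_two.trans (two_lt_den_of_lt_one_half hu0 hu)
  have hval := one_le_oneSubRootVal_add_of_dvd hl (hden hs (by linarith)) (hden ht (by linarith))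
    (hden (add_pos hs ht) hst) hdvd
  obtain rfl : l = 2 := by
    by_contra hl2
    exact (oneSubRootVal_add_lt_one hl hl2 hs ht hst).not_ge hval
  exact sin_combination_ne_zero_of_eighths hr
    (eq_eighths_of_one_le_oneSubRootVal_two_add hs ht hst hval) i j k h

theorem stmt15_general (n p q : ℤ) (r : ℚ) (hr : r ∉ Set.range ((↑) : ℤ → ℚ))
    (hq : 0 < q) (hqp : q < p) (hpn : p < n)
    (r₀ rp rq : ℝ)
    (h0 : ∃ k : ℤ, r₀ = (k : ℝ) - (r : ℝ))
    (hp : ∃ k : ℤ, rp = (k : ℝ) - (r : ℝ))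
    (hqr : ∃ k : ℤ, rq = (k : ℝ) - (r : ℝ)) :
    r₀ * Real.sin (((p : ℝ) - q) * π / n)
      + rp * Real.sin ((q : ℝ) * π / n)
      - rq * Real.sin ((p : ℝ) * π / n) ≠ 0 := by
  obtain ⟨i, rfl⟩ := h0
  obtain ⟨j, rfl⟩ := hp
  obtain ⟨k, rfl⟩ := hqr
  have hqQ : (0 : ℚ) < q := by exact_mod_cast hq
  have hqpQ : (0 : ℚ) < p - q := by exact_mod_cast sub_pos.2 hqp
  have hpnQ : (p : ℚ) < n := by exact_mod_cast hpn
  have hn : (0 : ℚ) < 2 * n := by linarith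
  have hsum : ((p - q) / (2 * n) + q / (2 * n) : ℚ) = p / (2 * n) := by ring
  have hlt : ((p - q) / (2 * n) + q / (2 * n) : ℚ) < 1 / 2 := by
    rw [hsum, div_lt_iff₀ hn]
    linarith
  have hangle (u : ℝ) : 2 * π * (u / (2 * n)) = u * π / n := by ring
  have h := sin_combination_ne_zero hr (div_pos hqpQ hn) (div_pos hqQ hn) hlt i j k
  rw [hsum] at h
  push_cast at h
  simpa only [hangle] using h

theorem stmt15 (n p q : ℤ) (hn : Even n) (hn4 : 4 ≤ n)
    (r : ℚ) (hr0 : 0 < r) (hr1 : r < 1)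
    (hq : 0 < q) (hqp : q < p) (hpn : p < n)
    (r₀ rp rq : ℝ)
    (h0 : ∃ k : ℤ, r₀ = (k : ℝ) - (r : ℝ))
    (hp : ∃ k : ℤ, rp = (k : ℝ) - (r : ℝ))
    (hqr : ∃ k : ℤ, rq = (k : ℝ) - (r : ℝ)) :
    r₀ * Real.sin (((p : ℝ) - q) * π / n)
      + rp * Real.sin ((q : ℝ) * π / n)
      - rq * Real.sin ((p : ℝ) * π / n) ≠ 0 := by
  have hr : r ∉ Set.range ((↑) : ℤ → ℚ) := by rintro ⟨k, rfl⟩; norm_cast at hr0 hr1; lia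
  exact stmt15_general n p q r hr hq hqp hpn r₀ rp rq h0 hp hqr
end

section
/- Let a ≤ b ≤ c be rational angles (real numbers of the form π·q with q ∈ ℚ) strictly between 0 and π/2, not all equal, and let A, B, C be nonzero rational numbers with A·cos(a) + B·cos(b) + C·cos(c) = 0. Then either (a, b, c) = (π/5, π/3, 2π/5) and B = C = −A, or there exists θ with 0 < θ < π/6 such that (a, b, c) = (θ, π/3 − θ, π/3 + θ) and B = C = −A. -/
open Real

/-!
Write `exp (i α k) = ζ ^ l k` with `ζ` a primitive `N`-th root of unity, `N` minimal, and split
`∑ A k (ζ ^ l k + ζ ^ (-l k)) = 0` according to the residue classes of the exponents modulo a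
divisor `d` of `N = d M`. The conjugations `ζ ↦ ζ ^ (1 + t M)` multiply the class of `j` by
`(ζ ^ M) ^ (j t)`, so averaging over `t` isolates each class. If `d` divides a power of `M`, all of
these are Galois conjugations and every class sum vanishes; for a prime `d = p ∤ M` all but one are,
and the class sums agree up to `p`-th roots of unity. If these are nonzero, every class modulo `p`
is hit by one of the six exponents `± l k`, so `p ≤ 5`.

When the class sums vanish for some `d = 4` or `d = p` odd, minimality of the relation yields signs
with `∑ A k exp (± i α k) = 0`, a triangle with rational angles: by the law of cosines and Niven's
theorem `|A|`, `|B|`, `|C|` are equal, which is the one-parameter family. Otherwise either `p = 5`,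
where one cosine is rational and the other two angles are `π / 5` or `2 π / 5`, or `N ∣ 12`, which
is impossible because `cos (π / 6)` is irrational.
-/

section VanishingSums

/-- The vanishing sum `∑ i, f i = 0` is a minimal relation: no nonempty proper subsum vanishes.
Minimality lets a relation found among some of the terms be promoted to one among all of them. -/
def IsMinimalRelation {ι G : Type*} [Fintype ι] [AddCommMonoid G] (f : ι → G) : Prop :=
  ∑ i, f i = 0 ∧ ∀ s : Finset ι, s.Nonempty → ∑ i ∈ s, f i = 0 → s = Finset.univ

theorem isMinimalRelation_of_ne_zero {G : Type*} [AddCommGroup G] {f : Fin 3 → G}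
    (hf : ∀ i, f i ≠ 0) (h : ∑ i, f i = 0) : IsMinimalRelation f := by
  refine ⟨h, fun s hs h0 => ?_⟩
  have hsingle (t : Finset (Fin 3)) (ht : ∑ i ∈ t, f i = 0) : t.card ≠ 1 := by
    intro hcard
    obtain ⟨i, rfl⟩ := Finset.card_eq_one.1 hcard
    exact hf i (by simpa using ht)
  have hcompl : ∑ i ∈ sᶜ, f i = 0 := by simpa [h0, h] using s.sum_add_sum_compl f
  have := s.card_add_card_compl
  have := hsingle s h0
  have := hsingle sᶜ hcompl
  have := hs.card_pos
  rw [← Finset.card_eq_iff_eq_univ]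
  simp only [Fintype.card_fin] at *
  omega

variable {K ι : Type*} [Field K] [Fintype ι]

theorem sum_range_zpow_mul {d : ℕ} {ω : K} (hω : IsPrimitiveRoot ω d) (m : ℤ) :
    ∑ t ∈ Finset.range d, ω ^ (m * t) = if (m : ZMod d) = 0 then (d : K) else 0 := by
  simp only [zpow_mul, zpow_natCast]
  split_ifs with h <;> rw [ZMod.intCast_zmod_eq_zero_iff_dvd, ← hω.zpow_eq_one_iff_dvd] at h
  · simp [h]
  · rw [geom_sum_eq h, ← zpow_natCast, zpow_comm, zpow_natCast, hω.pow_eq_one, one_zpow, sub_self,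
      zero_div]

/-- The part of `∑ i, A i * ζ ^ l i` whose exponents `l i` lie in the residue class `j` modulo `d`.
When `d` divides the order of `ζ`, Galois conjugation acts on these parts separately. -/
def residueSum (ζ : K) (A : ι → ℚ) (l : ι → ℤ) (d : ℕ) (j : ZMod d) : K :=
  ∑ i with (l i : ZMod d) = j, (A i : K) * ζ ^ l i

theorem natCast_mul_residueSum {ζ : K} (hζ : ζ ≠ 0) {d M : ℕ} (hω : IsPrimitiveRoot (ζ ^ M) d)
    (A : ι → ℚ) (l : ι → ℤ) (j : ℤ) :
    d * residueSum ζ A l d j = ∑ t ∈ Finset.range d,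
      (ζ ^ M) ^ (-(j * t)) * ∑ i, (A i : K) * ζ ^ ((1 + t * M : ℕ) * l i) := by
  have hterm (i : ι) (t : ℕ) : (ζ ^ M) ^ (-(j * t)) * ((A i : K) * ζ ^ ((1 + t * M : ℕ) * l i)) =
      A i * ζ ^ l i * (ζ ^ M) ^ ((l i - j) * t) := by
    rw [mul_left_comm, mul_assoc, ← zpow_natCast ζ M, ← zpow_mul, ← zpow_mul, ← zpow_add₀ hζ,
      ← zpow_add₀ hζ]
    congr 2
    push_cast
    ring
  simp_rw [residueSum, Finset.mul_sum, Finset.sum_filter, hterm]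
  rw [Finset.sum_comm]
  refine Finset.sum_congr rfl fun i _ => ?_
  simp_rw [← Finset.mul_sum, sum_range_zpow_mul hω, Int.cast_sub, sub_eq_zero]
  split_ifs <;> ring

/-- The `residueSum` of `∑ i, A i * (ζ ^ l i + ζ ^ (-l i))`, a sum with exponents `l i` and `-l i`
indexed by `ι ⊕ ι`. -/
def symmResidueSum (ζ : K) (A : ι → ℚ) (l : ι → ℤ) (d : ℕ) (j : ZMod d) : K :=
  residueSum ζ (Sum.elim A A) (Sum.elim l (-l)) d j

theorem symmResidueSum_eq_sum_ite (ζ : K) (A : ι → ℚ) (l : ι → ℤ) (d : ℕ) (j : ZMod d) :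
    symmResidueSum ζ A l d j = ∑ i, (A i : K) * ((if (l i : ZMod d) = j then ζ ^ l i else 0) +
      if (l i : ZMod d) = -j then ζ ^ (-l i) else 0) := by
  simp only [symmResidueSum, residueSum, Finset.sum_filter, Fintype.sum_sum_type, Sum.elim_inl,
    Sum.elim_inr, Pi.neg_apply, Int.cast_neg, neg_eq_iff_eq_neg, ← Finset.sum_add_distrib]
  refine Finset.sum_congr rfl fun i _ => ?_
  rw [mul_add, mul_ite, mul_ite, mul_zero]
  congr!

theorem exists_eq_or_eq_neg_of_symmResidueSum_eq {ζ ω V : K} (hω : ω ≠ 0) (hV : V ≠ 0) {A : ι → ℚ}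
    {l : ι → ℤ} {d : ℕ} (h : ∀ j : ℤ, symmResidueSum ζ A l d j = ω ^ j * V) (j : ZMod d) :
    ∃ i, (l i : ZMod d) = j ∨ (l i : ZMod d) = -j := by
  obtain ⟨j, rfl⟩ := ZMod.intCast_surjective j
  have hj : symmResidueSum ζ A l d j ≠ 0 := h j ▸ mul_ne_zero (zpow_ne_zero j hω) hV
  contrapose! hj
  simp [symmResidueSum_eq_sum_ite, hj]

theorem symmResidueSum_eq_of_forall_ne {ζ : K} {A : ι → ℚ} {l : ι → ℤ} {d : ℕ} {j : ZMod d} (i : ι)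
    (h : ∀ k ≠ i, (l k : ZMod d) ≠ j ∧ (l k : ZMod d) ≠ -j) :
    symmResidueSum ζ A l d j = A i * ((if (l i : ZMod d) = j then ζ ^ l i else 0) +
      if (l i : ZMod d) = -j then ζ ^ (-l i) else 0) := by
  rw [symmResidueSum_eq_sum_ite]
  refine Finset.sum_eq_single i (fun k _ hk => ?_) (by simp)
  simp [(h k hk).1, (h k hk).2]

theorem exists_sum_mul_zpow_eq_zero_of_symmResidueSum {ζ : K} {A : ι → ℚ} {l : ι → ℤ}
    (h : IsMinimalRelation fun i => (A i : K) * (ζ ^ l i + ζ ^ (-l i)))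
    {d : ℕ} {j : ZMod d} (hj : j ≠ -j) (hlj : ∃ i, (l i : ZMod d) = j)
    (hpos : symmResidueSum ζ A l d j = 0) (hneg : symmResidueSum ζ A l d (-j) = 0) :
    ∃ m : ι → ℤ, (∀ i, m i = l i ∨ m i = -l i) ∧ ∑ i, (A i : K) * ζ ^ m i = 0 := by
  let m (i : ι) : ℤ := if (l i : ZMod d) = j then l i else -l i
  let s : Finset ι := {i | (l i : ZMod d) = j ∨ (l i : ZMod d) = -j}
  have hpos' : ∑ i ∈ s, (A i : K) * ζ ^ m i = 0 := by
    rw [← hpos, symmResidueSum_eq_sum_ite, Finset.sum_filter]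
    refine Finset.sum_congr rfl fun i _ => ?_
    grind
  have hneg' : ∑ i ∈ s, (A i : K) * ζ ^ (-m i) = 0 := by
    rw [← hneg, symmResidueSum_eq_sum_ite, Finset.sum_filter]
    refine Finset.sum_congr rfl fun i _ => ?_
    grind
  have hpair (i : ι) : ζ ^ l i + ζ ^ (-l i) = ζ ^ m i + ζ ^ (-m i) := by grind
  have hs : s = Finset.univ := by
    refine h.2 s (hlj.imp fun i hi => by simp [s, hi]) ?_
    simp_rw [hpair, mul_add, Finset.sum_add_distrib, hpos', hneg', add_zero]
  exact ⟨m, fun i => ite_eq_or_eq _ _ _, by rwa [hs] at hpos'⟩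

theorem sum_sumElim_mul_zpow (ζ : K) (A : ι → ℚ) (l : ι → ℤ) :
    ∑ x, ((Sum.elim A A x : ℚ) : K) * ζ ^ Sum.elim l (-l) x =
      ∑ i, (A i : K) * (ζ ^ l i + ζ ^ (-l i)) := by
  simp [Fintype.sum_sum_type, mul_add, Finset.sum_add_distrib]

theorem sq_eq_sq_and_sq_eq_sq_of_mul_eq_mul {a v x w : K} (ha : a ≠ 0) (hx : x ≠ 0) (hw : w ≠ 0)
    (h : a * x = w * v) (hinv : a * x⁻¹ = w⁻¹ * v) : x ^ 2 = w ^ 2 ∧ v ^ 2 = a ^ 2 := by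
  field_simp at hinv
  have hsq : x ^ 2 = w ^ 2 := by
    refine mul_left_cancel₀ ha ?_
    linear_combination x * h - w * hinv
  refine ⟨hsq, mul_left_cancel₀ (pow_ne_zero 2 hw) ?_⟩
  linear_combination a ^ 2 * hsq - (a * x + w * v) * h

variable [CharZero K]

theorem sum_mul_zpow_mul_eq_zero_of_coprime {N : ℕ} [NeZero N] {ζ : K} (hζ : IsPrimitiveRoot ζ N)
    {k : ℕ} (hk : k.Coprime N) {A : ι → ℚ} {l : ι → ℤ} (h : ∑ i, (A i : K) * ζ ^ l i = 0) :
    ∑ i, (A i : K) * ζ ^ (k * l i) = 0 := by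
  have hroot : Polynomial.aeval (ζ ^ k) (minpoly ℚ ζ) = 0 := by
    rw [← Polynomial.cyclotomic_eq_minpoly_rat hζ (NeZero.pos N),
      Polynomial.cyclotomic_eq_minpoly_rat (hζ.pow_of_coprime k hk) (NeZero.pos N), minpoly.aeval]
  have hint : IsIntegral ℚ ζ := (hζ.isIntegral (NeZero.pos N)).tower_top
  let g := IntermediateField.AdjoinSimple.gen ℚ ζ
  obtain ⟨σ, hσ⟩ : ∃ σ : IntermediateField.adjoin ℚ {ζ} →ₐ[ℚ] K, σ g = ζ ^ k :=
    ⟨(IntermediateField.adjoin.powerBasis hint).lift (ζ ^ k)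
      (by rwa [IntermediateField.adjoin.powerBasis_gen, IntermediateField.minpoly_gen]),
      (IntermediateField.adjoin.powerBasis hint).lift_gen _ _⟩
  have hg : ∑ i, (A i : IntermediateField.adjoin ℚ {ζ}) * g ^ l i = 0 :=
    (IntermediateField.val _).injective <| by
      simp only [map_sum, map_mul, map_zpow₀, map_ratCast, map_zero]
      simpa [g] using h
  simpa [hσ, zpow_mul] using congrArg σ hg

theorem residueSum_eq_zero_of_dvd_pow {d M k : ℕ} [NeZero (d * M)] (hd : d ∣ M ^ k) {ζ : K}
    (hζ : IsPrimitiveRoot ζ (d * M)) {A : ι → ℚ} {l : ι → ℤ}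
    (h : ∑ i, (A i : K) * ζ ^ l i = 0) (j : ZMod d) : residueSum ζ A l d j = 0 := by
  have hdM : d * M ≠ 0 := NeZero.ne _
  obtain ⟨j, rfl⟩ := ZMod.intCast_surjective j
  have hsum := natCast_mul_residueSum (hζ.ne_zero hdM)
    (hζ.pow hdM.pos (mul_comm d M)) A l j
  have hcoprime (t : ℕ) : (1 + t * M).Coprime (d * M) :=
    have hM : (1 + t * M).Coprime M := by simp
    .mul_right ((hM.pow_right k).coprime_dvd_right hd) hM
  simp_rw [sum_mul_zpow_mul_eq_zero_of_coprime hζ (hcoprime _) h, mul_zero,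
    Finset.sum_const_zero] at hsum
  exact (mul_eq_zero.1 hsum).resolve_left (Nat.cast_ne_zero.2 (left_ne_zero_of_mul hdM))

theorem exists_residueSum_eq_zpow_mul {p M : ℕ} [NeZero (p * M)] (hp : p.Prime) (hpM : ¬ p ∣ M)
    {ζ : K} (hζ : IsPrimitiveRoot ζ (p * M)) {A : ι → ℚ} {l : ι → ℤ}
    (h : ∑ i, (A i : K) * ζ ^ l i = 0) :
    ∃ ω V : K, ω ^ p = 1 ∧ ∀ j : ℤ, residueSum ζ A l p j = ω ^ j * V := by
  have : Fact p.Prime := ⟨hp⟩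
  have hpM0 : p * M ≠ 0 := NeZero.ne _
  have hp0 : (p : K) ≠ 0 := Nat.cast_ne_zero.2 hp.ne_zero
  have hω : IsPrimitiveRoot (ζ ^ M) p := hζ.pow hpM0.pos (mul_comm p M)
  have hM : (M : ZMod p) ≠ 0 := by rwa [Ne, ZMod.natCast_eq_zero_iff]
  -- The unique `t < p` for which `1 + t * M` is not prime to `p`.
  set t₀ : ℕ := (-(M : ZMod p)⁻¹).val
  have ht₀ : t₀ ∈ Finset.range p := Finset.mem_range.2 (ZMod.val_lt _)
  have hcoprime {t : ℕ} (ht : t ∈ Finset.range p) (hne : t ≠ t₀) :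
      (1 + t * M).Coprime (p * M) := by
    refine .mul_right (Nat.Coprime.symm (hp.coprime_iff_not_dvd.2 fun hdvd => hne ?_)) (by simp)
    rw [← ZMod.natCast_eq_zero_iff, Nat.cast_add, Nat.cast_one, Nat.cast_mul] at hdvd
    have hcast : (t : ZMod p) = -(M : ZMod p)⁻¹ := by
      field_simp
      linear_combination hdvd
    rw [← ZMod.val_natCast_of_lt (Finset.mem_range.1 ht), hcast]
  refine ⟨(ζ ^ M) ^ (-(t₀ : ℤ)), (∑ i, (A i : K) * ζ ^ ((1 + t₀ * M : ℕ) * l i)) / p, ?_,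
    fun j => ?_⟩
  · rw [← zpow_natCast, zpow_comm, zpow_natCast, hω.pow_eq_one, one_zpow]
  · have hsum := natCast_mul_residueSum (hζ.ne_zero hpM0) hω A l j
    rw [Finset.sum_eq_single_of_mem t₀ ht₀ fun t ht hne => by
      rw [sum_mul_zpow_mul_eq_zero_of_coprime hζ (hcoprime ht hne) h, mul_zero]] at hsum
    rw [← zpow_mul, neg_mul, mul_comm (t₀ : ℤ), mul_div_assoc', ← hsum, mul_div_cancel_left₀ _ hp0]

theorem eq_of_eq_or_eq_neg_of_forall_exists {l : Fin 3 → ZMod 5}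
    (h : ∀ j, ∃ i, l i = j ∨ l i = -j) {i k : Fin 3} (hik : l k = l i ∨ l k = -l i) : k = i := by
  -- There are three squares modulo `5`, so `i ↦ l i ^ 2` is a bijection onto them.
  have hcard : (Finset.univ : Finset (Fin 3)).card ≤
      (Finset.univ.image fun j : ZMod 5 => j ^ 2).card := by decide
  have : Fact (Nat.Prime 5) := ⟨by norm_num⟩
  have hsurj : Set.SurjOn (fun i => l i ^ 2) (Finset.univ : Finset (Fin 3))
      (Finset.univ.image fun j : ZMod 5 => j ^ 2 : Finset (ZMod 5)) := by
    simp only [Finset.coe_image, Set.SurjOn, Finset.coe_univ, Set.image_univ]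
    rintro _ ⟨j, rfl⟩
    exact (h j).imp fun i hi => sq_eq_sq_iff_eq_or_eq_neg.2 hi
  exact Finset.injOn_of_surjOn_of_card_le _ (fun i _ => by simp) hsurj hcard (by simp)
    (by simp) (sq_eq_sq_iff_eq_or_eq_neg.2 hik)

theorem exists_pow_ten_eq_one_of_symmResidueSum {ζ : K} (hζ : ζ ≠ 0) {A : Fin 3 → ℚ}
    (hA : ∀ i, A i ≠ 0) {l : Fin 3 → ℤ} {ω V : K} (hω : ω ^ 5 = 1) (hV : V ≠ 0)
    (h : ∀ j : ℤ, symmResidueSum ζ A l 5 j = ω ^ j * V) :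
    ∃ i₀, (∃ q : ℚ, ζ ^ l i₀ + ζ ^ (-l i₀) = q) ∧ ∀ i ≠ i₀, (ζ ^ l i) ^ 10 = 1 := by
  have hω0 : ω ≠ 0 := by rintro rfl; simp at hω
  have hAK (i : Fin 3) : (A i : K) ≠ 0 := Rat.cast_ne_zero.2 (hA i)
  have hsurj := exists_eq_or_eq_neg_of_symmResidueSum_eq hω0 hV h
  have hinj {i k : Fin 3} (hki : k ≠ i) : (l k : ZMod 5) ≠ l i ∧ (l k : ZMod 5) ≠ -l i :=
    not_or.1 fun hl => hki (eq_of_eq_or_eq_neg_of_forall_exists hsurj hl)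
  have hself : ∀ r : ZMod 5, r ≠ 0 → r ≠ -r := by decide
  have hsquares {i : Fin 3} (hi : (l i : ZMod 5) ≠ 0) :
      (ζ ^ l i) ^ 2 = (ω ^ l i) ^ 2 ∧ V ^ 2 = (A i : K) ^ 2 := by
    refine sq_eq_sq_and_sq_eq_sq_of_mul_eq_mul (hAK i) (zpow_ne_zero _ hζ) (zpow_ne_zero _ hω0)
      ?_ ?_
    · rw [← h, symmResidueSum_eq_of_forall_ne i fun k hk => hinj hk]
      simp [hself _ hi]
    · rw [← zpow_neg, ← zpow_neg, ← h, Int.cast_neg,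
        symmResidueSum_eq_of_forall_ne i fun k hk => by simpa using (hinj hk).symm]
      simp [hself _ hi]
  obtain ⟨i₀, hi₀⟩ : ∃ i₀, (l i₀ : ZMod 5) = 0 := by simpa using hsurj 0
  have hl {i : Fin 3} (hi : i ≠ i₀) : (l i : ZMod 5) ≠ 0 := hi₀ ▸ (hinj hi).1
  refine ⟨i₀, ?_, fun i hi => ?_⟩
  · have hV₀ : V = A i₀ * (ζ ^ l i₀ + ζ ^ (-l i₀)) := by
      have hsum := symmResidueSum_eq_of_forall_ne (ζ := ζ) (A := A) i₀ fun k hk => hinj hk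
      simpa [h, hi₀] using (h 0).symm.trans (by simpa [hi₀] using hsum)
    obtain ⟨i, hi⟩ := exists_ne i₀
    obtain ⟨q, hq⟩ : ∃ q : ℚ, V = q :=
      (sq_eq_sq_iff_eq_or_eq_neg.1 (hsquares (hl hi)).2).elim (fun hV => ⟨A i, hV⟩)
        fun hV => ⟨-A i, by simpa using hV⟩
    exact ⟨q / A i₀, by rw [Rat.cast_div, ← hq, hV₀, mul_div_cancel_left₀ _ (hAK i₀)]⟩
  · calc (ζ ^ l i) ^ 10 = ((ω ^ l i) ^ 2) ^ 5 := by rw [← (hsquares (hl hi)).1]; ring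
      _ = (ω ^ 5) ^ (2 * l i) := by
        simp only [← zpow_natCast, ← zpow_mul]
        congr 1
        push_cast
        ring
      _ = 1 := by rw [hω, one_zpow]

theorem exists_sum_mul_zpow_eq_zero_of_dvd_pow {d M k : ℕ} [NeZero (d * M)] (hd : d ∣ M ^ k)
    {ζ : K} (hζ : IsPrimitiveRoot ζ (d * M)) {A : ι → ℚ} {l : ι → ℤ}
    (h : IsMinimalRelation fun i => (A i : K) * (ζ ^ l i + ζ ^ (-l i)))
    (hl : ∃ i, (l i : ZMod d) ≠ -l i) :
    ∃ m : ι → ℤ, (∀ i, m i = l i ∨ m i = -l i) ∧ ∑ i, (A i : K) * ζ ^ m i = 0 := by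
  obtain ⟨i, hi⟩ := hl
  have hsum := (sum_sumElim_mul_zpow ζ A l).trans h.1
  exact exists_sum_mul_zpow_eq_zero_of_symmResidueSum h hi ⟨i, rfl⟩
    (residueSum_eq_zero_of_dvd_pow hd hζ hsum _) (residueSum_eq_zero_of_dvd_pow hd hζ hsum _)

theorem exists_sum_mul_zpow_eq_zero_or_symmResidueSum_eq {p M : ℕ} [NeZero (p * M)] (hp : p.Prime)
    (hp2 : p ≠ 2) (hpM : ¬ p ∣ M) {ζ : K} (hζ : IsPrimitiveRoot ζ (p * M)) {A : ι → ℚ} {l : ι → ℤ}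
    (h : IsMinimalRelation fun i => (A i : K) * (ζ ^ l i + ζ ^ (-l i)))
    (hl : ∃ i, (l i : ZMod p) ≠ 0) :
    (∃ m : ι → ℤ, (∀ i, m i = l i ∨ m i = -l i) ∧ ∑ i, (A i : K) * ζ ^ m i = 0) ∨
      ∃ ω V : K, ω ^ p = 1 ∧ V ≠ 0 ∧ ∀ j : ℤ, symmResidueSum ζ A l p j = ω ^ j * V := by
  have hsum := (sum_sumElim_mul_zpow ζ A l).trans h.1
  obtain ⟨ω, V, hω, hV⟩ := exists_residueSum_eq_zpow_mul hp hpM hζ hsum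
  refine (eq_or_ne V 0).imp (fun hV0 => ?_) fun hV0 => ⟨ω, V, hω, hV0, hV⟩
  have hzero (j : ZMod p) : symmResidueSum ζ A l p j = 0 := by
    obtain ⟨j, rfl⟩ := ZMod.intCast_surjective j
    rw [symmResidueSum, hV, hV0, mul_zero]
  obtain ⟨i, hi⟩ := hl
  exact exists_sum_mul_zpow_eq_zero_of_symmResidueSum h
    (ZMod.ne_neg_self (hp.odd_of_ne_two hp2) hi) ⟨i, rfl⟩ (hzero _) (hzero _)

theorem le_two_mul_card_of_forall_exists {n : ℕ} [NeZero n] {r : ι → ZMod n}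
    (h : ∀ j, ∃ i, r i = j ∨ r i = -j) : n ≤ 2 * Fintype.card ι := by
  have hsurj : Function.Surjective (Sum.elim r (-r)) := fun j => by
    obtain ⟨i, hi | hi⟩ := h j
    · exact ⟨.inl i, hi⟩
    · exact ⟨.inr i, by simp [hi]⟩
  simpa [two_mul, ZMod.card] using Fintype.card_le_of_surjective _ hsurj

theorem dvd_twelve_of_not_dvd {N : ℕ} (h8 : ¬ 8 ∣ N) (h9 : ¬ 9 ∣ N)
    (h : ∀ p, p.Prime → 5 ≤ p → ¬ p ∣ N) : N ∣ 12 := by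
  refine (Nat.dvd_iff_prime_pow_dvd_dvd 12 N).2 fun p k hp hpk => ?_
  rcases Nat.eq_zero_or_pos k with rfl | hk
  · simp
  have hp5 : p < 5 := not_le.1 fun hp5 => h p hp hp5 ((dvd_pow_self p hk.ne').trans hpk)
  have hk3 : p = 2 → k < 3 := by
    rintro rfl
    exact not_le.1 fun hk3 => h8 ((pow_dvd_pow 2 hk3).trans hpk)
  have hk2 : p = 3 → k < 2 := by
    rintro rfl
    exact not_le.1 fun hk2 => h9 ((pow_dvd_pow 3 hk2).trans hpk)
  have := hp.two_le
  interval_cases p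
  · have := hk3 rfl
    interval_cases k <;> decide
  · have := hk2 rfl
    interval_cases k
    decide
  · exact absurd hp (by decide)

theorem exists_sum_mul_zpow_eq_zero_or_pow_ten_eq_one {p M : ℕ} [NeZero (p * M)] (hp : p.Prime)
    (hp5 : 5 ≤ p) (hpM : ¬ p ∣ M) {ζ : K} (hζ : IsPrimitiveRoot ζ (p * M)) {A : Fin 3 → ℚ}
    (hA : ∀ i, A i ≠ 0) {l : Fin 3 → ℤ}
    (h : IsMinimalRelation fun i => (A i : K) * (ζ ^ l i + ζ ^ (-l i)))
    (hl : ∃ i, (l i : ZMod p) ≠ 0) :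
    (∃ m : Fin 3 → ℤ, (∀ i, m i = l i ∨ m i = -l i) ∧ ∑ i, (A i : K) * ζ ^ m i = 0) ∨
      ∃ i₀, (∃ q : ℚ, ζ ^ l i₀ + ζ ^ (-l i₀) = q) ∧ ∀ i ≠ i₀, (ζ ^ l i) ^ 10 = 1 := by
  refine (exists_sum_mul_zpow_eq_zero_or_symmResidueSum_eq hp (by omega) hpM hζ h hl).imp_right ?_
  rintro ⟨ω, V, hω, hV, hωV⟩
  have hω0 : ω ≠ 0 := by
    rintro rfl
    simp [hp.ne_zero] at hω
  have hp6 : p ≤ 2 * 3 := by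
    have : NeZero p := ⟨hp.ne_zero⟩
    exact le_two_mul_card_of_forall_exists (exists_eq_or_eq_neg_of_symmResidueSum_eq hω0 hV hωV)
  obtain rfl : p = 5 := by
    have := Nat.odd_iff.1 (hp.odd_of_ne_two (by omega))
    omega
  exact exists_pow_ten_eq_one_of_symmResidueSum (hζ.ne_zero (NeZero.ne _)) hA hω hV hωV

theorem sum_mul_zpow_eq_zero_or_pow_ten_eq_one_or_dvd_twelve {N : ℕ} [NeZero N] {ζ : K}
    (hζ : IsPrimitiveRoot ζ N) {A : Fin 3 → ℚ} (hA : ∀ i, A i ≠ 0) {l : Fin 3 → ℤ}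
    (hl : ∀ p : ℕ, p.Prime → p ∣ N → ∃ i, ¬ (p : ℤ) ∣ l i)
    (h : IsMinimalRelation fun i => (A i : K) * (ζ ^ l i + ζ ^ (-l i))) :
    (∃ m : Fin 3 → ℤ, (∀ i, m i = l i ∨ m i = -l i) ∧ ∑ i, (A i : K) * ζ ^ m i = 0) ∨
      (∃ i₀, (∃ q : ℚ, ζ ^ l i₀ + ζ ^ (-l i₀) = q) ∧ ∀ i ≠ i₀, (ζ ^ l i) ^ 10 = 1) ∨ N ∣ 12 := by
  refine or_iff_not_imp_left.2 fun hsum => or_iff_not_imp_left.2 fun hten => ?_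
  have hl0 {p : ℕ} (hp : p.Prime) (hpN : p ∣ N) : ∃ i, (l i : ZMod p) ≠ 0 :=
    (hl p hp hpN).imp fun i hi => mt (ZMod.intCast_zmod_eq_zero_iff_dvd _ _).1 hi
  have hsq {p : ℕ} (hp : p.Prime) (hp2 : p ≠ 2) : ¬ p * p ∣ N := fun hpN => hsum <| by
    obtain ⟨i, hi⟩ := hl0 hp (dvd_of_mul_left_dvd hpN)
    obtain ⟨M, rfl⟩ := dvd_of_mul_left_dvd hpN
    have hpM : p ∣ M ^ 1 := by simpa using Nat.dvd_of_mul_dvd_mul_left hp.pos hpN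
    exact exists_sum_mul_zpow_eq_zero_of_dvd_pow hpM hζ h
      ⟨i, ZMod.ne_neg_self (hp.odd_of_ne_two hp2) hi⟩
  refine dvd_twelve_of_not_dvd (fun h8 => hsum ?_) (hsq Nat.prime_three (by decide))
    fun p hp hp5 hpN => ?_
  · obtain ⟨M, rfl⟩ : 4 ∣ N := Dvd.dvd.trans (by decide) h8
    have hM : 4 ∣ M ^ 2 := pow_dvd_pow_of_dvd (a := 2) (by omega) 2
    refine exists_sum_mul_zpow_eq_zero_of_dvd_pow hM hζ h ?_
    refine (hl 2 Nat.prime_two (by omega)).imp fun i hi => ?_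
    rw [← Int.cast_neg, Ne, ZMod.intCast_eq_intCast_iff_dvd_sub]
    push_cast
    omega
  · have hlp := hl0 hp hpN
    obtain ⟨M, rfl⟩ := hpN
    have hpM : ¬ p ∣ M := fun hpM => hsq hp (by omega) (mul_dvd_mul_left p hpM)
    exact (exists_sum_mul_zpow_eq_zero_or_pow_ten_eq_one hp hp5 hpM hζ hA h hlp).elim hsum hten

theorem exists_isPrimitiveRoot_zpow_eq [IsAlgClosed K] {κ : Type*} [Finite κ] {z : κ → K}
    (hz : ∀ i, IsOfFinOrder (z i)) : ∃ (N : ℕ) (ζ : K) (l : κ → ℤ), N ≠ 0 ∧ IsPrimitiveRoot ζ N ∧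
      (∀ i, ζ ^ l i = z i) ∧ ∀ p : ℕ, p.Prime → p ∣ N → ∃ i, ¬ (p : ℤ) ∣ l i := by
  cases nonempty_fintype κ
  set N := Finset.univ.lcm fun i => orderOf (z i)
  have hN : N ≠ 0 := by
    simpa [N, Finset.lcm_eq_zero_iff] using hz
  have : NeZero N := ⟨hN⟩
  obtain ⟨ζ, hζ⟩ := HasEnoughRootsOfUnity.exists_primitiveRoot K N
  have hroot (i : κ) : ∃ k < N, ζ ^ k = z i := hζ.eq_pow_of_pow_eq_one <|
    orderOf_dvd_iff_pow_eq_one.1 (Finset.dvd_lcm (Finset.mem_univ i))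
  choose l _ hl using hroot
  refine ⟨N, ζ, fun i => l i, hN, hζ, fun i => by simpa using hl i, fun p hp hpN => ?_⟩
  by_contra! hdvd
  obtain ⟨M, hM⟩ := hpN
  have hNM : N ∣ M := Finset.lcm_dvd fun i _ => by
    rw [orderOf_dvd_iff_pow_eq_one, ← hl, ← pow_mul, hζ.pow_eq_one_iff_dvd, hM]
    exact mul_dvd_mul_right (Int.natCast_dvd_natCast.1 (hdvd i)) M
  have hM0 : M ≠ 0 := by
    rintro rfl
    exact hN hM
  exact (lt_mul_left hM0.pos hp.one_lt).not_ge (hM ▸ Nat.le_of_dvd hM0.pos hNM)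

theorem sum_eq_zero_or_pow_ten_eq_one_or_pow_twelve_eq_one [IsAlgClosed K] {z : Fin 3 → K}
    (hz : ∀ i, IsOfFinOrder (z i)) (hne : ∀ i, z i + (z i)⁻¹ ≠ 0) {A : Fin 3 → ℚ}
    (hA : ∀ i, A i ≠ 0) (h : ∑ i, (A i : K) * (z i + (z i)⁻¹) = 0) :
    (∃ w : Fin 3 → K, (∀ i, w i = z i ∨ w i = (z i)⁻¹) ∧ ∑ i, (A i : K) * w i = 0) ∨
      (∃ i₀, (∃ q : ℚ, z i₀ + (z i₀)⁻¹ = q) ∧ ∀ i ≠ i₀, z i ^ 10 = 1) ∨ ∀ i, z i ^ 12 = 1 := by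
  obtain ⟨N, ζ, l, hN, hζ, hl, hprime⟩ := exists_isPrimitiveRoot_zpow_eq hz
  have : NeZero N := ⟨hN⟩
  obtain rfl : (fun i => ζ ^ l i) = z := funext hl
  simp only [← zpow_neg] at hne h ⊢
  have hmin := isMinimalRelation_of_ne_zero
    (fun i => mul_ne_zero (Rat.cast_ne_zero.2 (hA i)) (hne i)) h
  refine (sum_mul_zpow_eq_zero_or_pow_ten_eq_one_or_dvd_twelve hζ hA hprime hmin).imp ?_
    (Or.imp_right fun h12 i => ?_)
  · rintro ⟨m, hm, hsum⟩
    exact ⟨fun i => ζ ^ m i, fun i => (hm i).imp (congrArg _) (congrArg _), hsum⟩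
  · rw [← zpow_natCast, zpow_comm, zpow_natCast, (hζ.pow_eq_one_iff_dvd 12).2 h12, one_zpow]

end VanishingSums

section RationalAngles

theorem isOfFinOrder_exp_mul_I {θ : ℝ} (hθ : ∃ q : ℚ, θ = π * q) :
    IsOfFinOrder (Complex.exp (θ * Complex.I)) := by
  obtain ⟨q, rfl⟩ := hθ
  refine isOfFinOrder_iff_pow_eq_one.2 ⟨2 * q.den, by positivity, ?_⟩
  rw [← Complex.exp_nat_mul, Complex.exp_eq_one_iff]
  refine ⟨q.num, ?_⟩
  have hq : (q : ℂ) * q.den = q.num := mod_cast q.mul_den_eq_num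
  push_cast
  linear_combination 2 * (π : ℂ) * Complex.I * hq

theorem exp_mul_I_add_inv (θ : ℝ) :
    Complex.exp (θ * Complex.I) + (Complex.exp (θ * Complex.I))⁻¹ = (2 * cos θ : ℝ) := by
  rw [← Complex.exp_neg, ← neg_mul]
  push_cast
  rw [Complex.two_cos]

theorem exists_sum_cos_eq_zero_and_sum_sin_eq_zero {ι : Type*} [Fintype ι] {α : ι → ℝ} {A : ι → ℚ}
    {w : ι → ℂ} (hw : ∀ i, w i = Complex.exp (α i * Complex.I) ∨
      w i = (Complex.exp (α i * Complex.I))⁻¹) (h : ∑ i, (A i : ℂ) * w i = 0) :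
    ∃ x : ι → ℝ, (∀ i, |x i| = |α i|) ∧
      ∑ i, (A i : ℝ) * cos (x i) = 0 ∧ ∑ i, (A i : ℝ) * sin (x i) = 0 := by
  have hx (i : ι) : ∃ x : ℝ, (x = α i ∨ x = -α i) ∧ w i = Complex.exp (x * Complex.I) :=
    (hw i).elim (fun hi => ⟨α i, .inl rfl, hi⟩)
      fun hi => ⟨-α i, .inr rfl, by rw [hi, ← Complex.exp_neg, Complex.ofReal_neg, neg_mul]⟩
  choose x hxα hxw using hx
  simp only [hxw] at h
  refine ⟨x, fun i => abs_eq_abs.2 (hxα i), ?_, ?_⟩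
  · simpa [Complex.exp_ofReal_mul_I_re] using congrArg Complex.re h
  · simpa [Complex.exp_ofReal_mul_I_im] using congrArg Complex.im h

theorem sum_sin_eq_zero_or_exp_pow_ten_eq_one_or_exp_pow_twelve_eq_one {α : Fin 3 → ℝ}
    (hα : ∀ i, ∃ q : ℚ, α i = π * q) (hcos : ∀ i, cos (α i) ≠ 0) {A : Fin 3 → ℚ}
    (hA : ∀ i, A i ≠ 0) (h : ∑ i, (A i : ℝ) * cos (α i) = 0) :
    (∃ x : Fin 3 → ℝ, (∀ i, |x i| = |α i|) ∧
      ∑ i, (A i : ℝ) * cos (x i) = 0 ∧ ∑ i, (A i : ℝ) * sin (x i) = 0) ∨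
      (∃ i₀, (∃ q : ℚ, cos (α i₀) = q) ∧ ∀ i ≠ i₀, Complex.exp (α i * Complex.I) ^ 10 = 1) ∨
      ∀ i, Complex.exp (α i * Complex.I) ^ 12 = 1 := by
  have hsum : ∑ i, (A i : ℂ) * (Complex.exp (α i * Complex.I) +
      (Complex.exp (α i * Complex.I))⁻¹) = 0 := by
    simp_rw [exp_mul_I_add_inv]
    have h2 : ∑ i, (A i : ℝ) * (2 * cos (α i)) = 0 := by
      simp_rw [mul_left_comm _ (2 : ℝ), ← Finset.mul_sum, h, mul_zero]
    exact_mod_cast h2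
  refine (sum_eq_zero_or_pow_ten_eq_one_or_pow_twelve_eq_one
    (fun i => isOfFinOrder_exp_mul_I (hα i)) (fun i => ?_) hA hsum).imp ?_ (.imp_left ?_)
  · rw [exp_mul_I_add_inv]
    exact_mod_cast mul_ne_zero two_ne_zero (hcos i)
  · rintro ⟨w, hw, hsum⟩
    exact exists_sum_cos_eq_zero_and_sum_sin_eq_zero hw hsum
  · rintro ⟨i₀, ⟨q, hq⟩, h10⟩
    rw [exp_mul_I_add_inv] at hq
    have hq' : 2 * cos (α i₀) = q := mod_cast hq
    exact ⟨i₀, ⟨q / 2, by push_cast; linarith⟩, h10⟩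

theorem mul_sin_sub_eq_mul_sin_sub {A B C x y z : ℝ} (hcos : A * cos x + B * cos y + C * cos z = 0)
    (hsin : A * sin x + B * sin y + C * sin z = 0) : B * sin (x - y) = C * sin (z - x) := by
  simp only [sin_sub]
  linear_combination sin x * hcos - cos x * hsin

theorem sq_eq_sq_add_sq_add_mul_cos_sub {A B C x y z : ℝ}
    (hcos : A * cos x + B * cos y + C * cos z = 0) (hsin : A * sin x + B * sin y + C * sin z = 0) :
    C ^ 2 = A ^ 2 + B ^ 2 + 2 * A * B * cos (x - y) := by
  rw [cos_sub]
  linear_combination (C * cos z - A * cos x - B * cos y) * hcos +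
    (C * sin z - A * sin x - B * sin y) * hsin - C ^ 2 * sin_sq_add_cos_sq z +
    A ^ 2 * sin_sq_add_cos_sq x + B ^ 2 * sin_sq_add_cos_sq y

theorem two_mul_abs_cos_le_one {θ : ℝ} (hθ : ∃ r : ℚ, θ = r * π) (hcos : ∃ q : ℚ, cos θ = q)
    (hsin : sin θ ≠ 0) : 2 * |cos θ| ≤ 1 := by
  have hsq := sin_sq_add_cos_sq θ
  have hsin' := sq_pos_of_ne_zero hsin
  rcases niven hθ hcos with h | h | h | h | h <;> rw [h] at hsq ⊢ <;>
    norm_num [abs_of_pos, abs_of_neg] at hsq ⊢ <;> simp_all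

theorem sq_add_sq_sub_abs_mul_abs_le_sq {A B C : ℚ} (hA : A ≠ 0) (hB : B ≠ 0) {x y z : ℝ}
    (hx : ∃ q : ℚ, x = π * q) (hy : ∃ q : ℚ, y = π * q)
    (hcos : A * cos x + B * cos y + C * cos z = 0) (hsin : A * sin x + B * sin y + C * sin z = 0)
    (hne : sin (x - y) ≠ 0) : A ^ 2 + B ^ 2 - |A| * |B| ≤ C ^ 2 := by
  have hxy : ∃ r : ℚ, x - y = r * π := by
    obtain ⟨⟨r, rfl⟩, ⟨t, rfl⟩⟩ := hx, hy
    exact ⟨r - t, by push_cast; ring⟩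
  have hlaw := sq_eq_sq_add_sq_add_mul_cos_sub hcos hsin
  have hAB : (2 * A * B : ℝ) ≠ 0 := by exact_mod_cast mul_ne_zero (mul_ne_zero two_ne_zero hA) hB
  have hrat : cos (x - y) = ((C ^ 2 - A ^ 2 - B ^ 2) / (2 * A * B) : ℚ) := by
    push_cast
    rw [eq_div_iff hAB]
    linarith
  have hle : -(2 * A * B * cos (x - y)) ≤ |(A : ℝ)| * |(B : ℝ)| := calc
    -(2 * A * B * cos (x - y)) ≤ |2 * A * B * cos (x - y)| := neg_le_abs _
    _ = |(A : ℝ)| * |(B : ℝ)| * (2 * |cos (x - y)|) := by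
      simp only [abs_mul, abs_two]
      ring
    _ ≤ |(A : ℝ)| * |(B : ℝ)| :=
      mul_le_of_le_one_right (by positivity) (two_mul_abs_cos_le_one hxy ⟨_, hrat⟩ hne)
  have hreal : (A : ℝ) ^ 2 + B ^ 2 - |(A : ℝ)| * |(B : ℝ)| ≤ C ^ 2 := by linarith
  exact_mod_cast hreal

theorem abs_eq_abs_of_sum_cos_eq_zero_of_sum_sin_eq_zero {A B C : ℚ} (hA : A ≠ 0) (hB : B ≠ 0)
    (hC : C ≠ 0) {x y z : ℝ} (hx : ∃ q : ℚ, x = π * q) (hy : ∃ q : ℚ, y = π * q)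
    (hz : ∃ q : ℚ, z = π * q) (hcos : A * cos x + B * cos y + C * cos z = 0)
    (hsin : A * sin x + B * sin y + C * sin z = 0) (hne : sin (x - y) ≠ 0) :
    |A| = |B| ∧ |B| = |C| := by
  have hcos' : C * cos z + A * cos x + B * cos y = 0 := by linarith
  have hsin' : C * sin z + A * sin x + B * sin y = 0 := by linarith
  have hne_zx : sin (z - x) ≠ 0 := right_ne_zero_of_mul <|
    mul_sin_sub_eq_mul_sin_sub hcos hsin ▸ mul_ne_zero (Rat.cast_ne_zero.2 hB) hne
  have hne_yz : sin (y - z) ≠ 0 := right_ne_zero_of_mul <|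
    mul_sin_sub_eq_mul_sin_sub hcos' hsin' ▸ mul_ne_zero (Rat.cast_ne_zero.2 hA) hne_zx
  have hAB := sq_add_sq_sub_abs_mul_abs_le_sq hA hB hx hy hcos hsin hne
  have hCA := sq_add_sq_sub_abs_mul_abs_le_sq hC hA hz hx hcos' hsin' hne_zx
  have hBC := sq_add_sq_sub_abs_mul_abs_le_sq (C := A) (z := x) hB hC hy hz
    (by linarith) (by linarith) hne_yz
  have hsum : (|A| - |B|) ^ 2 + (|B| - |C|) ^ 2 + (|C| - |A|) ^ 2 ≤ 0 := by
    linarith [sq_abs A, sq_abs B, sq_abs C]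
  constructor <;> nlinarith

theorem sin_sub_ne_zero_of_sum_cos_eq_zero {A B C x y z : ℝ} (hC : C ≠ 0) (hx : |x| < π / 2)
    (hy : |y| < π / 2) (hz : |z| < π / 2) (hxyz : ¬ (|x| = |y| ∧ |y| = |z|))
    (hcos : A * cos x + B * cos y + C * cos z = 0) (hsin : A * sin x + B * sin y + C * sin z = 0) :
    sin (x - y) ≠ 0 := by
  have hinj {u v : ℝ} (hu : |u| < π / 2) (hv : |v| < π / 2) (h : sin (u - v) = 0) : u = v := by
    rw [abs_lt] at hu hv
    exact sub_eq_zero.1 ((sin_eq_zero_iff_of_lt_of_lt (by linarith) (by linarith)).1 h)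
  intro hxy
  have hzx : C * sin (z - x) = 0 := by
    rw [← mul_sin_sub_eq_mul_sin_sub hcos hsin, hxy, mul_zero]
  obtain rfl := hinj hx hy hxy
  obtain rfl := hinj hz hx ((mul_eq_zero.1 hzx).resolve_left hC)
  exact hxyz ⟨rfl, rfl⟩

theorem eq_neg_and_eq_neg_of_abs_eq_abs {A B C : ℚ} (hA : A ≠ 0) (hAB : |A| = |B|)
    (hBC : |B| = |C|) {u v w : ℝ} (hw : 0 < w) (hwv : w ≤ v) (hvu : v ≤ u)
    (h : A * u + B * v + C * w = 0) : B = -A ∧ C = -A := by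
  have hA' : (A : ℝ) ≠ 0 := Rat.cast_ne_zero.2 hA
  have hne {t : ℝ} (ht : 0 < t) (h : A * t = 0) : False := mul_ne_zero hA' ht.ne' h
  rcases abs_eq_abs.1 hAB.symm with rfl | rfl <;>
    rcases abs_eq_abs.1 (hBC.symm.trans hAB.symm) with rfl | rfl
  · exact (hne (t := u + v + w) (by linarith) (by linarith)).elim
  · exact (hne (t := u + v - w) (by linarith) (by push_cast at h; linarith)).elim
  · exact (hne (t := u - v + w) (by linarith) (by push_cast at h; linarith)).elim
  · exact ⟨rfl, rfl⟩

theorem cos_sub_eq_cos_abs_sub_abs_or_cos_abs_add_abs (y z : ℝ) :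
    cos (y - z) = cos (|y| - |z|) ∨ cos (y - z) = cos (|y| + |z|) := by
  rw [cos_sub, cos_sub, cos_add, cos_abs, cos_abs]
  rcases abs_choice y with hy | hy <;> rcases abs_choice z with hz | hz <;> simp [hy, hz]

theorem eq_pi_div_three_sub_and_add_of_cos_eq {a y z : ℝ} (ha : 0 < a) (hay : a ≤ |y|)
    (hyz : |y| ≤ |z|) (hz : |z| < π / 2) (hcos_sub : cos (y - z) = -1 / 2)
    (hcos : cos a = cos y + cos z) : |y| = π / 3 - a ∧ |z| = π / 3 + a := by
  have hdiff : cos (|y| - |z|) ≠ -1 / 2 := by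
    have : 0 < cos (|y| - |z|) := cos_pos_of_mem_Ioo ⟨by linarith, by linarith⟩
    linarith
  have hadd : cos (|y| + |z|) = cos (2 * (π / 3)) := by
    have h3 : cos (2 * (π / 3)) = -1 / 2 := by
      rw [cos_two_mul, cos_pi_div_three]
      norm_num
    rw [h3, ← hcos_sub, eq_comm]
    exact (cos_sub_eq_cos_abs_sub_abs_or_cos_abs_add_abs y z).resolve_left
      fun h => hdiff (h ▸ hcos_sub)
  have hyz' : |y| + |z| = 2 * (π / 3) :=
    injOn_cos ⟨by linarith, by linarith⟩ ⟨by positivity, by linarith [pi_pos]⟩ hadd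
  have hcos' : cos a = cos ((|z| - |y|) / 2) := by
    rw [hcos, ← cos_abs y, ← cos_abs z, add_comm, cos_add_cos, add_comm |z|, hyz',
      mul_div_cancel_left₀ _ two_ne_zero, cos_pi_div_three]
    ring
  have ha' : a = (|z| - |y|) / 2 :=
    injOn_cos ⟨ha.le, by linarith⟩ ⟨by linarith, by linarith⟩ hcos'
  constructor <;> linarith

theorem cos_sub_eq_neg_half_of_cos_eq_add_of_sin_eq_add {x y z : ℝ} (hcos : cos x = cos y + cos z)
    (hsin : sin x = sin y + sin z) : cos (y - z) = -1 / 2 := by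
  have h := sq_eq_sq_add_sq_add_mul_cos_sub (A := 1) (B := 1) (C := -1) (x := y) (y := z) (z := x)
    (by linarith) (by linarith)
  linarith

theorem abs_eq_pi_div_three_sub_and_add_of_sum_cos_eq_zero_of_sum_sin_eq_zero {A B C : ℚ}
    (hA : A ≠ 0) (hB : B ≠ 0) (hC : C ≠ 0) {x y z : ℝ} (hx : ∃ q : ℚ, x = π * q)
    (hy : ∃ q : ℚ, y = π * q) (hz : ∃ q : ℚ, z = π * q) (h0 : 0 < |x|) (hxy : |x| ≤ |y|)
    (hyz : |y| ≤ |z|) (h2 : |z| < π / 2) (hne : ¬ (|x| = |y| ∧ |y| = |z|))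
    (hcos : A * cos x + B * cos y + C * cos z = 0) (hsin : A * sin x + B * sin y + C * sin z = 0) :
    |y| = π / 3 - |x| ∧ |z| = π / 3 + |x| ∧ B = -A ∧ C = -A := by
  have hA' : (A : ℝ) ≠ 0 := Rat.cast_ne_zero.2 hA
  have hsin_ne : sin (x - y) ≠ 0 := sin_sub_ne_zero_of_sum_cos_eq_zero (Rat.cast_ne_zero.2 hC)
    (by linarith) (by linarith) h2 hne hcos hsin
  obtain ⟨hAB, hBC⟩ :=
    abs_eq_abs_of_sum_cos_eq_zero_of_sum_sin_eq_zero hA hB hC hx hy hz hcos hsin hsin_ne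
  have hcos_z : 0 < cos z := cos_pos_of_mem_Ioo (abs_lt.1 h2)
  have hcos_mono {u v : ℝ} (hv : |v| < π / 2) (huv : |u| ≤ |v|) : cos v ≤ cos u := by
    rw [← cos_abs u, ← cos_abs v]
    exact cos_le_cos_of_nonneg_of_le_pi (abs_nonneg u) (by linarith) huv
  obtain ⟨rfl, rfl⟩ := eq_neg_and_eq_neg_of_abs_eq_abs hA hAB hBC hcos_z (hcos_mono h2 hyz)
    (hcos_mono (by linarith) hxy) hcos
  push_cast at hcos hsin
  have hcos_x : cos x = cos y + cos z := mul_left_cancel₀ hA' (by linarith)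
  have hsin_x : sin x = sin y + sin z := mul_left_cancel₀ hA' (by linarith)
  obtain ⟨hy3, hz3⟩ := eq_pi_div_three_sub_and_add_of_cos_eq h0 hxy hyz h2
    (cos_sub_eq_neg_half_of_cos_eq_add_of_sin_eq_add hcos_x hsin_x) (by rwa [cos_abs])
  exact ⟨hy3, hz3, rfl, rfl⟩

theorem exists_eq_pi_mul_of_abs_eq_abs {x θ : ℝ} (h : |x| = |θ|) (hθ : ∃ q : ℚ, θ = π * q) :
    ∃ q : ℚ, x = π * q := by
  obtain ⟨q, rfl⟩ := hθ
  rcases abs_eq_abs.1 h with rfl | rfl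
  · exact ⟨q, rfl⟩
  · exact ⟨-q, by simp⟩

theorem eq_pi_div_three_sub_and_add_of_sum_cos_eq_zero_of_sum_sin_eq_zero {α : Fin 3 → ℝ}
    (hα : Monotone α) (hrat : ∀ i, ∃ q : ℚ, α i = π * q) (hpos : ∀ i, 0 < α i) (h2 : α 2 < π / 2)
    (hne : ¬ (α 0 = α 1 ∧ α 1 = α 2)) {A : Fin 3 → ℚ} (hA : ∀ i, A i ≠ 0) {x : Fin 3 → ℝ}
    (hx : ∀ i, |x i| = |α i|) (hcos : ∑ i, (A i : ℝ) * cos (x i) = 0)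
    (hsin : ∑ i, (A i : ℝ) * sin (x i) = 0) :
    α 1 = π / 3 - α 0 ∧ α 2 = π / 3 + α 0 ∧ A 1 = -A 0 ∧ A 2 = -A 0 := by
  have hx' (i : Fin 3) : |x i| = α i := (hx i).trans (abs_of_pos (hpos i))
  have hxrat (i : Fin 3) : ∃ q : ℚ, x i = π * q := exists_eq_pi_mul_of_abs_eq_abs (hx i) (hrat i)
  rw [Fin.sum_univ_three] at hcos hsin
  simp only [← hx'] at hpos h2 hne ⊢
  exact abs_eq_pi_div_three_sub_and_add_of_sum_cos_eq_zero_of_sum_sin_eq_zero (hA 0) (hA 1) (hA 2)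
    (hxrat 0) (hxrat 1) (hxrat 2) (hpos 0) (by simpa only [hx'] using hα (by decide))
    (by simpa only [hx'] using hα (by decide)) h2 hne hcos hsin

theorem exists_eq_mul_pi_of_exp_pow_eq_one {θ : ℝ} {n : ℕ} (h0 : 0 < θ) (h2 : θ < π / 2)
    (hn : n ≠ 0) (h : Complex.exp (θ * Complex.I) ^ n = 1) :
    ∃ k : ℕ, 0 < k ∧ 4 * k < n ∧ θ = 2 * k / n * π := by
  rw [← Complex.exp_nat_mul, Complex.exp_eq_one_iff] at h
  obtain ⟨k, hk⟩ := h
  have hk' : n * θ = k * (2 * π) := by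
    have := congrArg Complex.im hk
    simpa using this
  have hn' : (0 : ℝ) < n := by positivity
  have hk0 : (0 : ℝ) < k := by
    have := mul_pos hn' h0
    rw [hk'] at this
    exact pos_of_mul_pos_left this (by positivity)
  lift k to ℕ using by exact_mod_cast hk0.le
  refine ⟨k, by exact_mod_cast hk0, ?_, ?_⟩
  · have : (4 * k : ℝ) < n := by
      push_cast at hk'
      nlinarith [pi_pos]
    exact_mod_cast this
  · push_cast at hk'
    field_simp
    linarith

theorem eq_pi_div_five_or_eq_of_exp_pow_ten_eq_one {θ : ℝ} (h0 : 0 < θ) (h2 : θ < π / 2)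
    (h : Complex.exp (θ * Complex.I) ^ 10 = 1) : θ = π / 5 ∨ θ = 2 * π / 5 := by
  obtain ⟨k, hk, hk4, rfl⟩ := exists_eq_mul_pi_of_exp_pow_eq_one h0 h2 (by decide) h
  have : k < 3 := by omega
  interval_cases k
  · left; push_cast; ring
  · right; push_cast; ring

theorem eq_pi_div_six_or_eq_of_exp_pow_twelve_eq_one {θ : ℝ} (h0 : 0 < θ) (h2 : θ < π / 2)
    (h : Complex.exp (θ * Complex.I) ^ 12 = 1) : θ = π / 6 ∨ θ = π / 3 := by
  obtain ⟨k, hk, hk4, rfl⟩ := exists_eq_mul_pi_of_exp_pow_eq_one h0 h2 (by decide) h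
  have : k < 3 := by omega
  interval_cases k
  · left; push_cast; ring
  · right; push_cast; ring

theorem irrational_cos_pi_div_five : Irrational (cos (π / 5)) := by
  have h := irrational_cos_rat_mul_pi (r := 1 / 5) (by norm_num)
  convert h using 2
  push_cast; ring

theorem irrational_cos_pi_div_six : Irrational (cos (π / 6)) := by
  have h := irrational_cos_rat_mul_pi (r := 1 / 6) (by norm_num)
  convert h using 2
  push_cast; ring

theorem cos_two_mul_pi_div_five : cos (2 * π / 5) = cos (π / 5) - 1 / 2 := by
  rw [mul_div_assoc, cos_two_mul]
  linarith [quadratic_root_cos_pi_div_five]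

theorem eq_zero_and_eq_zero_of_irrational_mul_add_eq_zero {r : ℝ} (hr : Irrational r)
    {p q : ℚ} (h : (p * r + q : ℝ) = 0) : p = 0 ∧ q = 0 := by
  obtain rfl : p = 0 := by
    by_contra hp
    exact ((hr.ratCast_mul hp).add_ratCast q).ne_zero h
  simpa using h

theorem eq_pi_div_three_of_cos_eq_ratCast {θ : ℝ} (hθ : ∃ q : ℚ, θ = π * q) (h0 : 0 < θ)
    (h2 : θ < π / 2) (hcos : ∃ q : ℚ, cos θ = q) : θ = π / 3 := by
  have h := niven_angle_eq (hθ.imp fun q hq => hq.trans (mul_comm _ _)) hcos ⟨h0.le, by linarith⟩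
  grind

theorem eq_pi_div_five_of_sum_cos_eq_zero {α : Fin 3 → ℝ} (hα : Monotone α) {A : Fin 3 → ℚ}
    (hA : ∀ i, A i ≠ 0) (h : ∑ i, (A i : ℝ) * cos (α i) = 0) {i₀ : Fin 3}
    (h₀ : α i₀ = π / 3) (h₅ : ∀ i ≠ i₀, α i = π / 5 ∨ α i = 2 * π / 5) :
    α 0 = π / 5 ∧ α 1 = π / 3 ∧ α 2 = 2 * π / 5 ∧ A 1 = -A 0 ∧ A 2 = -A 0 := by
  have h01 : α 0 ≤ α 1 := hα (by decide)
  have h12 : α 1 ≤ α 2 := hα (by decide)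
  have hπ := pi_pos
  rw [Fin.sum_univ_three] at h
  fin_cases i₀ <;> simp only [Fin.zero_eta, Fin.mk_one, Fin.reduceFinMk] at h₀ h₅
  · have h1 : α 1 = 2 * π / 5 := (h₅ 1 (by decide)).resolve_left (by intro h; linarith)
    have h2 : α 2 = 2 * π / 5 := (h₅ 2 (by decide)).resolve_left (by intro h; linarith)
    rw [h₀, h1, h2, cos_pi_div_three, cos_two_mul_pi_div_five] at h
    have hzero := eq_zero_and_eq_zero_of_irrational_mul_add_eq_zero irrational_cos_pi_div_five
      (p := A 1 + A 2) (q := A 0 / 2 - (A 1 + A 2) / 2) (by push_cast; linarith)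
    exact (hA 0 (by linarith)).elim
  · have h0 : α 0 = π / 5 := (h₅ 0 (by decide)).resolve_right (by intro h; linarith)
    have h2 : α 2 = 2 * π / 5 := (h₅ 2 (by decide)).resolve_left (by intro h; linarith)
    rw [h0, h₀, h2, cos_pi_div_three, cos_two_mul_pi_div_five] at h
    have hzero := eq_zero_and_eq_zero_of_irrational_mul_add_eq_zero irrational_cos_pi_div_five
      (p := A 0 + A 2) (q := A 1 / 2 - A 2 / 2) (by push_cast; linarith)
    exact ⟨h0, h₀, h2, by linarith, by linarith⟩
  · have h0 : α 0 = π / 5 := (h₅ 0 (by decide)).resolve_right (by intro h; linarith)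
    have h1 : α 1 = π / 5 := (h₅ 1 (by decide)).resolve_right (by intro h; linarith)
    rw [h0, h1, h₀, cos_pi_div_three] at h
    have hzero := eq_zero_and_eq_zero_of_irrational_mul_add_eq_zero irrational_cos_pi_div_five
      (p := A 0 + A 1) (q := A 2 / 2) (by push_cast; linarith)
    exact (hA 2 (by linarith)).elim

theorem sum_cos_ne_zero_of_eq_pi_div_six_or_eq_pi_div_three {α : Fin 3 → ℝ} (hα : Monotone α)
    (hne : ¬ (α 0 = α 1 ∧ α 1 = α 2)) (h6 : ∀ i, α i = π / 6 ∨ α i = π / 3) {A : Fin 3 → ℚ}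
    (hA : ∀ i, A i ≠ 0) : ∑ i, (A i : ℝ) * cos (α i) ≠ 0 := by
  have h01 : α 0 ≤ α 1 := hα (by decide)
  have h12 : α 1 ≤ α 2 := hα (by decide)
  have hπ := pi_pos
  intro h
  rw [Fin.sum_univ_three] at h
  have h0 : α 0 = π / 6 := (h6 0).resolve_right fun h0 => hne <| by
    have := h6 1
    have := h6 2
    grind
  have h2 : α 2 = π / 3 := (h6 2).resolve_left fun h2 => hne <| by
    have := h6 1
    have := h6 2
    grind
  rw [h0, h2, cos_pi_div_three] at h
  rcases h6 1 with h1 | h1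
  · rw [h1] at h
    have hzero := eq_zero_and_eq_zero_of_irrational_mul_add_eq_zero irrational_cos_pi_div_six
      (p := A 0 + A 1) (q := A 2 / 2) (by push_cast; linarith)
    exact hA 2 (by linarith)
  · rw [h1, cos_pi_div_three] at h
    have hzero := eq_zero_and_eq_zero_of_irrational_mul_add_eq_zero irrational_cos_pi_div_six
      (p := A 0) (q := (A 1 + A 2) / 2) (by push_cast; linarith)
    exact hA 0 hzero.1

end RationalAngles

theorem stmt19 (a b c : ℝ)
    (ha : ∃ qa : ℚ, a = π * qa) (hb : ∃ qb : ℚ, b = π * qb) (hc : ∃ qc : ℚ, c = π * qc)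
    (hab : a ≤ b) (hbc : b ≤ c)
    (h0a : 0 < a) (hc2 : c < π / 2)
    (hne : ¬ (a = b ∧ b = c))
    (A B C : ℚ) (hA : A ≠ 0) (hB : B ≠ 0) (hC : C ≠ 0)
    (heq : (A : ℝ) * Real.cos a + (B : ℝ) * Real.cos b + (C : ℝ) * Real.cos c = 0) :
    (a = π / 5 ∧ b = π / 3 ∧ c = 2 * π / 5 ∧ B = -A ∧ C = -A) ∨
    (∃ θ : ℝ, 0 < θ ∧ θ < π / 6 ∧ a = θ ∧ b = π / 3 - θ ∧ c = π / 3 + θ ∧ B = -A ∧ C = -A) := by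
  have hmono : Monotone ![a, b, c] :=
    Fin.monotone_iff_le_succ.2 (by simp [Fin.forall_fin_two, hab, hbc])
  have hpos (i) : 0 < ![a, b, c] i := h0a.trans_le (hmono (Fin.zero_le i))
  have hlt (i) : ![a, b, c] i < π / 2 := (hmono (Fin.le_last i)).trans_lt hc2
  have hrat : ∀ i, ∃ q : ℚ, ![a, b, c] i = π * q := by simp [Fin.forall_fin_succ, ha, hb, hc]
  have hne0 : ∀ i, ![A, B, C] i ≠ 0 := by simp [Fin.forall_fin_succ, hA, hB, hC]
  have hsum : ∑ i, (![A, B, C] i : ℝ) * cos (![a, b, c] i) = 0 := by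
    simpa [Fin.sum_univ_three] using heq
  have hcos (i) : cos (![a, b, c] i) ≠ 0 := (cos_pos_of_mem_Ioo ⟨by linarith [hpos i], hlt i⟩).ne'
  rcases sum_sin_eq_zero_or_exp_pow_ten_eq_one_or_exp_pow_twelve_eq_one hrat hcos hne0 hsum with
    ⟨x, hx, hcosx, hsinx⟩ | ⟨i₀, hq, h10⟩ | h12
  · obtain ⟨hb', hc', hBA, hCA⟩ : b = π / 3 - a ∧ c = π / 3 + a ∧ B = -A ∧ C = -A :=
      eq_pi_div_three_sub_and_add_of_sum_cos_eq_zero_of_sum_sin_eq_zero hmono hrat hpos hc2 hne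
        hne0 hx hcosx hsinx
    exact .inr ⟨a, h0a, by linarith, rfl, hb', hc', hBA, hCA⟩
  · exact .inl <| eq_pi_div_five_of_sum_cos_eq_zero hmono hne0 hsum
      (eq_pi_div_three_of_cos_eq_ratCast (hrat i₀) (hpos i₀) (hlt i₀) hq) fun i hi =>
        eq_pi_div_five_or_eq_of_exp_pow_ten_eq_one (hpos i) (hlt i) (h10 i hi)
  · exact (sum_cos_ne_zero_of_eq_pi_div_six_or_eq_pi_div_three hmono hne (fun i =>
      eq_pi_div_six_or_eq_of_exp_pow_twelve_eq_one (hpos i) (hlt i) (h12 i)) hne0 hsum).elim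
end
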